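/- Let U ∈ R^{d×d} be a real normal matrix (U U^T = U^T U). Then there exists a real orthogonal matrix S ∈ R^{d×d} such that U = S D S^T, where D is a real block diagonal matrix whose blocks each have size at most 2×2. -/

import Mathlib

/-!
Write `T` for the operator of `U` on Euclidean space and `T'` for that of `Uᵀ`, its adjoint. By
normality the symmetric operators `T + T'` and `T' T` commute with each other and with `T` and `T'`,
so on every nonzero subspace invariant under `T` and `T'` they have a common eigenvector `v`
(`exists_joint_eigenvector`), say `T v + T' v = a v` and `T' T v = c v`. Then
`T (T v) = T (a v - T' v) = a T v - c v`, so `W = span {v, T v}`, of dimension at most two, is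
invariant under both operators (`exists_small_invariant`). Its orthogonal complement is invariant
as well, and induction on the dimension gives an orthonormal basis adapted to an orthogonal
decomposition into invariant subspaces of dimension at most two (`exists_adapted_family`). This
avoids complexification. The matrix `S` has this basis as columns.
-/

section Helpers

variable {E : Type*} [NormedAddCommGroup E] [InnerProductSpace ℝ E] [FiniteDimensional ℝ E]

lemma exists_eigenvector_mem (A : E →ₗ[ℝ] E) (hA : A.IsSymmetric) (V : Submodule ℝ E)
    (hV : ∀ x ∈ V, A x ∈ V) (h0 : V ≠ ⊥) : ∃ v ∈ V, v ≠ 0 ∧ ∃ a : ℝ, A v = a • v := by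
  have : Nontrivial V := (Submodule.nontrivial_iff_ne_bot).2 h0
  have hs := hA.restrict_invariant hV
  obtain ⟨a, ha⟩ : ∃ a : ℝ, Module.End.HasEigenvalue (A.restrict hV) a :=
    ⟨_, hs.hasEigenvalue_iSup_of_finiteDimensional⟩
  obtain ⟨v, hv⟩ := ha.exists_hasEigenvector
  refine ⟨v, v.2, fun h => hv.2 (Subtype.ext h), a, ?_⟩
  exact congrArg Subtype.val hv.apply_eq_smul

lemma exists_joint_eigenvector (A B : E →ₗ[ℝ] E) (hA : A.IsSymmetric) (hB : B.IsSymmetric)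
    (hAB : ∀ x, A (B x) = B (A x)) (V : Submodule ℝ E)
    (hVA : ∀ x ∈ V, A x ∈ V) (hVB : ∀ x ∈ V, B x ∈ V) (h0 : V ≠ ⊥) :
    ∃ v ∈ V, v ≠ 0 ∧ (∃ a : ℝ, A v = a • v) ∧ ∃ c : ℝ, B v = c • v := by
  obtain ⟨v, hv, hv0, a, ha⟩ := exists_eigenvector_mem A hA V hVA h0
  -- `B` preserves the `a`-eigenspace of `A` in `V`, because it commutes with `A`.
  obtain ⟨w, hw, hw0, c, hc⟩ := exists_eigenvector_mem B hB (V ⊓ Module.End.eigenspace A a)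
    (fun x hx => ⟨hVB x hx.1, by
      have h := Module.End.mem_eigenspace_iff.1 hx.2
      exact Module.End.mem_eigenspace_iff.2 (by rw [hAB, h, map_smul])⟩)
    (fun h => hv0 ((Submodule.eq_bot_iff _).1 h v ⟨hv, Module.End.mem_eigenspace_iff.2 ha⟩))
  exact ⟨w, hw.1, hw0, ⟨a, Module.End.mem_eigenspace_iff.1 hw.2⟩, c, hc⟩

lemma exists_small_invariant (T T' : E →ₗ[ℝ] E)
    (hadj : ∀ x y, inner ℝ (T x) y = inner ℝ x (T' y))
    (hcomm : ∀ x, T (T' x) = T' (T x)) (V : Submodule ℝ E)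
    (hV : ∀ x ∈ V, T x ∈ V) (hV' : ∀ x ∈ V, T' x ∈ V) (h0 : V ≠ ⊥) :
    ∃ W ≤ V, W ≠ ⊥ ∧ Module.finrank ℝ W ≤ 2 ∧ (∀ x ∈ W, T x ∈ W) ∧ ∀ x ∈ W, T' x ∈ W := by
  have hadj' : ∀ x y, inner ℝ (T' x) y = inner ℝ x (T y) := fun x y => by
    rw [real_inner_comm, ← hadj, real_inner_comm]
  obtain ⟨v, hv, hv0, ⟨a, ha⟩, c, hc⟩ := exists_joint_eigenvector (T + T') (T' ∘ₗ T)
    (fun x y => by simp [inner_add_left, inner_add_right, hadj, hadj', add_comm])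
    (fun x y => by simp [hadj, hadj'])
    (fun x => by simp [hcomm]) V
    (fun x hx => V.add_mem (hV x hx) (hV' x hx)) (fun x hx => hV' _ (hV x hx)) h0
  simp only [LinearMap.add_apply, LinearMap.comp_apply] at ha hc
  have hT'v : T' v = a • v - T v := by rw [← ha]; abel
  have hTTv : T (T v) = a • T v - c • v := by
    have h := congrArg T hT'v
    rw [hcomm, hc, map_sub, map_smul] at h
    rw [h]; abel
  have mv : v ∈ Submodule.span ℝ {v, T v} := Submodule.subset_span (by simp)
  have mTv : T v ∈ Submodule.span ℝ {v, T v} := Submodule.subset_span (by simp)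
  refine ⟨Submodule.span ℝ {v, T v}, ?_, ?_, ?_, ?_, ?_⟩
  · rw [Submodule.span_le]
    rintro x (rfl | rfl)
    exacts [hv, hV _ hv]
  · exact fun h => hv0 ((Submodule.eq_bot_iff _).1 h v mv)
  · classical
    have := finrank_span_finset_le_card (R := ℝ) ({v, T v} : Finset E)
    rw [Finset.coe_pair] at this
    exact this.trans Finset.card_le_two
  · intro x hx
    obtain ⟨p, q, rfl⟩ := Submodule.mem_span_pair.1 hx
    rw [map_add, map_smul, map_smul, hTTv]
    exact add_mem (Submodule.smul_mem _ _ mTv) (Submodule.smul_mem _ _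
      (sub_mem (Submodule.smul_mem _ _ mTv) (Submodule.smul_mem _ _ mv)))
  · intro x hx
    obtain ⟨p, q, rfl⟩ := Submodule.mem_span_pair.1 hx
    rw [map_add, map_smul, map_smul, hc, hT'v]
    exact add_mem (Submodule.smul_mem _ _ (sub_mem (Submodule.smul_mem _ _ mv) mTv))
      (Submodule.smul_mem _ _ (Submodule.smul_mem _ _ mv))

/-- The induction runs over invariant subspaces `V` of a fixed space, so that `T` and `T'` never
have to be restricted. -/
lemma exists_adapted_family (T T' : E →ₗ[ℝ] E)
    (hadj : ∀ x y, inner ℝ (T x) y = inner ℝ x (T' y))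
    (hcomm : ∀ x, T (T' x) = T' (T x)) (n : ℕ) : ∀ V : Submodule ℝ E,
    Module.finrank ℝ V = n → (∀ x ∈ V, T x ∈ V) → (∀ x ∈ V, T' x ∈ V) →
    ∃ (ι : Type) (_ : Fintype ι) (b : ι → E) (σ : ι → ι), Orthonormal ℝ b ∧
      Submodule.span ℝ (Set.range b) = V ∧ Function.Involutive σ ∧
      ∀ i j, inner ℝ (b i) (T (b j)) ≠ 0 → j = i ∨ j = σ i := by
  have hadj' : ∀ x y, inner ℝ (T' x) y = inner ℝ x (T y) := fun x y => by
    rw [real_inner_comm, ← hadj, real_inner_comm]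
  induction n using Nat.strong_induction_on with
  | _ n ih =>
  intro V hn hV hV'
  by_cases h0 : V = ⊥
  · refine ⟨Empty, inferInstance, Empty.elim, id, ?_, ?_, fun _ => rfl, fun i => i.elim⟩
    · exact ⟨fun i => i.elim, fun i => i.elim⟩
    · simp [h0, Set.range_eq_empty]
  obtain ⟨W, hWV, hW0, hW2, hW, hW'⟩ := exists_small_invariant T T' hadj hcomm V hV hV' h0
  have hsup : W ⊔ (Wᗮ ⊓ V) = V := Submodule.sup_orthogonal_inf_of_hasOrthogonalProjection hWV
  have hlt : Module.finrank ℝ (Wᗮ ⊓ V : Submodule ℝ E) < n := by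
    rw [← hn]
    refine Submodule.finrank_lt_finrank_of_lt (lt_of_le_of_ne inf_le_right fun h => hW0 ?_)
    have h1 : W ≤ Wᗮ := hWV.trans (h ▸ inf_le_left)
    exact (Submodule.eq_bot_iff _).2 fun x hx =>
      inner_self_eq_zero.1 ((Submodule.mem_orthogonal _ _).1 (h1 hx) x hx)
  obtain ⟨κ, _, b, σ, hb, hspan, hσ, hbT⟩ := ih _ hlt (Wᗮ ⊓ V) rfl
    (fun x hx => ⟨(Submodule.mem_orthogonal _ _).2 fun u hu => by
      rw [← hadj']; exact (Submodule.mem_orthogonal _ _).1 hx.1 _ (hW' u hu), hV x hx.2⟩)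
    (fun x hx => ⟨(Submodule.mem_orthogonal _ _).2 fun u hu => by
      rw [← hadj]; exact (Submodule.mem_orthogonal _ _).1 hx.1 _ (hW u hu), hV' x hx.2⟩)
  let w := stdOrthonormalBasis ℝ W
  have hw : Orthonormal ℝ (fun i => (w i : E)) := w.orthonormal.comp_linearIsometry W.subtypeₗᵢ
  have hbm : ∀ k, b k ∈ Wᗮ := fun k => by
    have : b k ∈ Submodule.span ℝ (Set.range b) := Submodule.subset_span ⟨k, rfl⟩
    rw [hspan] at this
    exact this.1
  have hperp : ∀ x ∈ W, ∀ k, inner ℝ x (b k) = 0 := fun x hx k =>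
    (Submodule.mem_orthogonal _ _).1 (hbm k) x hx
  -- On the at most two indices belonging to `W`, `Fin.rev` swaps them or is the identity.
  refine ⟨Fin (Module.finrank ℝ W) ⊕ κ, inferInstance, Sum.elim (fun i => (w i : E)) b,
    Sum.map Fin.rev σ, ⟨?_, ?_⟩, ?_, ?_, ?_⟩
  · rintro (i | k)
    exacts [hw.1 i, hb.1 k]
  · rintro (i | k) (j | l) hne
    · exact hw.2 (fun h => hne (congrArg _ h))
    · exact hperp _ (w i).2 l
    · exact (real_inner_comm _ _).trans (hperp _ (w j).2 k)
    · exact hb.2 (fun h => hne (congrArg _ h))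
  · rw [Set.Sum.elim_range, Submodule.span_union, hspan]
    have : Submodule.span ℝ (Set.range fun i => (w i : E)) = W := by
      have h := congrArg (Submodule.map W.subtype) w.toBasis.span_eq
      rw [Submodule.map_span, ← Set.range_comp, Submodule.map_top, Submodule.range_subtype] at h
      simpa [Function.comp_def] using h
    rw [this, hsup]
  · rintro (i | k)
    · simp
    · simp [hσ k]
  · rintro (i | k) (j | l) hne
    · have : j = i ∨ j = Fin.rev i := by
        simp only [Fin.ext_iff, Fin.val_rev]
        omega
      simpa using this
    · refine absurd ?_ hne
      simp only [Sum.elim_inl, Sum.elim_inr]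
      rw [← hadj']
      exact hperp _ (hW' _ (w i).2) l
    · refine absurd ?_ hne
      simp only [Sum.elim_inl, Sum.elim_inr]
      rw [real_inner_comm]
      exact hperp _ (hW _ (w j).2) k
    · simpa using hbT k l hne

end Helpers

open Matrix

/-- Every real normal matrix `U` is orthogonally similar to a real block
diagonal matrix `D` whose blocks have size at most `2 × 2`.  Block diagonality
is expressed via an involution `σ` pairing up the indices: `D` vanishes off
the disjoint `1×1` or `2×2` principal blocks `{i, σ i}`. -/
theorem normal_real_block_diagonalization {d : ℕ}
    (U : Matrix (Fin d) (Fin d) ℝ) (hU : U * Uᵀ = Uᵀ * U) :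
    ∃ (S D : Matrix (Fin d) (Fin d) ℝ) (σ : Fin d → Fin d),
      Sᵀ * S = 1 ∧ U = S * D * Sᵀ ∧ Function.Involutive σ ∧
      ∀ i j, D i j ≠ 0 → j = i ∨ j = σ i := by
  classical
  let T : EuclideanSpace ℝ (Fin d) →ₗ[ℝ] EuclideanSpace ℝ (Fin d) := Matrix.toEuclideanLin U
  let T' : EuclideanSpace ℝ (Fin d) →ₗ[ℝ] EuclideanSpace ℝ (Fin d) := Matrix.toEuclideanLin Uᵀ
  obtain ⟨ι, _, b, σ, hb, hspan, hσ, hbT⟩ := exists_adapted_family T T'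
    (fun x y => by
      simp only [T, T', EuclideanSpace.inner_eq_star_dotProduct, Matrix.ofLp_toLpLin,
        Matrix.toLin'_apply, star_trivial]
      rw [Matrix.mulVec_transpose, Matrix.dotProduct_mulVec])
    (fun x => by
      apply (WithLp.ofLp_injective 2)
      simp only [T, T', Matrix.ofLp_toLpLin, Matrix.toLin'_apply, Matrix.mulVec_mulVec, hU])
    _ ⊤ rfl (fun _ _ => trivial) (fun _ _ => trivial)
  let e₀ : OrthonormalBasis ι ℝ (EuclideanSpace ℝ (Fin d)) := OrthonormalBasis.mk hb hspan.ge
  have hcard : Fintype.card ι = d := by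
    rw [← Module.finrank_eq_card_basis e₀.toBasis, finrank_euclideanSpace_fin]
  let e : ι ≃ Fin d := Fintype.equivFinOfCardEq hcard
  let S : Matrix (Fin d) (Fin d) ℝ := Matrix.of fun i j => b (e.symm j) i
  have hS : Sᵀ * S = 1 := by
    ext i j
    have h := (orthonormal_iff_ite.1 hb) (e.symm i) (e.symm j)
    simp only [EmbeddingLike.apply_eq_iff_eq] at h
    rw [Matrix.one_apply, ← h]
    simp [S, Matrix.mul_apply, PiLp.inner_apply, mul_comm]
  have hS' : S * Sᵀ = 1 := mul_eq_one_comm.1 hS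
  refine ⟨S, Sᵀ * U * S, fun i => e (σ (e.symm i)), hS, ?_, fun i => by simp [hσ _], ?_⟩
  · calc U = (S * Sᵀ) * U * (S * Sᵀ) := by rw [hS', one_mul, mul_one]
      _ = S * (Sᵀ * U * S) * Sᵀ := by simp only [mul_assoc]
  · intro i j hij
    have hD : (Sᵀ * U * S) i j = inner ℝ (b (e.symm i)) (T (b (e.symm j))) := by
      rw [mul_assoc]
      simp [S, T, Matrix.mul_apply, PiLp.inner_apply, Matrix.mulVec, dotProduct, mul_comm]
    rw [hD] at hij
    rcases hbT _ _ hij with h | h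
    · exact Or.inl (e.symm.injective h)
    · exact Or.inr ((Equiv.symm_apply_eq e).1 h)
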